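/- arXiv:0705.2404 — 3 statements merged into one kernel-verified Lean document; each statement's English description precedes it below -/
import Mathlib

section
/- For every position G of the octal game 4.7 (including the empty position), G is a misère P-position if and only if Φ(G) ∈ P. -/
/-!
Inverting `b` in `Q` turns every element into some `a^E b^D`: there `c` becomes `a b²` and `d_n`
becomes `a^(n+1) b^(n+4)`. For a position, `E` is the number of beans modulo 2 and `D` is the sum
of the weights `deg k` of the heaps. What this localisation forgets is a single factor `c` or `d_n`
that has not been absorbed by powers of `b`; it is present exactly when some heap of size 5 with
`D ≤ 2`, or some heap `k = n + 7` with `D ≤ 2n + 4`, occurs (a *visible* heap, `Vis`).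

In these terms membership in `P` is the criterion `F`: if a visible heap exists, then `E` and `D`
are odd; if not, then either `E` is odd and `D = 0`, or `E` and `D` are even and `D ≥ 2`.

The proof has two independent halves.

* `PP_iff_F`: the P-positions are the positions satisfying `F`. No move joins two positions
  satisfying `F` (`not_F_move`; the main point is that a split changes the parity of `D + E`), and
  every nonempty position violating `F` has an option satisfying it (`exists_F`, by moving in or
  next to the largest heap). The empty position violates `F`, so induction along moves applies.
* `F_iff_mem_P`: `F` at `G` is equivalent to `Φ(G) ∈ P`. The triple (`D`, `E` mod 2, visible
  letters) defines a congruence on words satisfying all the relations (`invCon`, `rel_le`), so the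
  criterion makes sense on `Q`, and it holds on `P`. Conversely every element of `Q` equals
  `a^e b^m`, `a^e c` or `a^e b^m d_n` with `m ≤ n` (`hasNF_cls`), and the words of this kind
  satisfying the criterion represent the listed elements of `P` (`mem_P_of_normal`).
-/

/-- One legal move in the octal game 4.7: split a heap into two nonempty heaps
removing no beans; or remove 1 bean, either removing the whole heap, leaving
one nonempty heap, or splitting the remainder into two nonempty heaps.
Positions are finite multisets of heap sizes. -/
def Move47 (G G' : Multiset ℕ) : Prop :=
  (∃ k ∈ G, ∃ i j : ℕ, 1 ≤ i ∧ 1 ≤ j ∧ i + j = k ∧ G' = i ::ₘ j ::ₘ G.erase k) ∨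
  (1 ∈ G ∧ G' = G.erase 1) ∨
  (∃ k ∈ G, 2 ≤ k ∧ G' = (k - 1) ::ₘ G.erase k) ∨
  (∃ k ∈ G, 3 ≤ k ∧ ∃ i j : ℕ, 1 ≤ i ∧ 1 ≤ j ∧ i + j = k - 1 ∧
    G' = i ::ₘ j ::ₘ G.erase k)

/-- Generators of the misère quotient of 4.7: `a`, `b`, `c`, and `d n`. -/
inductive Gen47 where
  | a : Gen47
  | b : Gen47
  | c : Gen47
  | d : ℕ → Gen47

/-- The free commutative monoid on the generators, written multiplicatively. -/
abbrev FM47 := Multiplicative (Multiset Gen47)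

/-- The generator `x` as an element of the free commutative monoid. -/
def fgen47 (x : Gen47) : FM47 := Multiplicative.ofAdd {x}

def fa : FM47 := fgen47 .a
def fb : FM47 := fgen47 .b
def fc : FM47 := fgen47 .c
def fd (n : ℕ) : FM47 := fgen47 (.d n)

/-- The defining relations of the quotient `Q` for 4.7:
`a² = 1`, `bc = ab³`, `c² = b⁴`, `b^(n+1) d_n = a^(n+1) b^(2n+5)`,
`c d_n = a b² d_n`, and `d_m d_n = a^(m+1) b^(m+4) d_n` for `m ≤ n`. -/
def rel47 : FM47 → FM47 → Prop := fun x y =>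
  (x = fa ^ 2 ∧ y = 1) ∨
  (x = fb * fc ∧ y = fa * fb ^ 3) ∨
  (x = fc ^ 2 ∧ y = fb ^ 4) ∨
  (∃ n : ℕ, x = fb ^ (n + 1) * fd n ∧ y = fa ^ (n + 1) * fb ^ (2 * n + 5)) ∨
  (∃ n : ℕ, x = fc * fd n ∧ y = fa * fb ^ 2 * fd n) ∨
  (∃ m n : ℕ, m ≤ n ∧ x = fd m * fd n ∧ y = fa ^ (m + 1) * fb ^ (m + 4) * fd n)

/-- The commutative monoid `Q` presented by generators `a`, `b`, `c`, `d_n`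
and the relations `rel47`. -/
def Q47 : Type := (conGen rel47).Quotient

instance : CommMonoid Q47 := Con.commMonoid _

/-- The image of `a` in `Q`. -/
def qa : Q47 := (conGen rel47).mk' fa
/-- The image of `b` in `Q`. -/
def qb : Q47 := (conGen rel47).mk' fb
/-- The image of `c` in `Q`. -/
def qc : Q47 := (conGen rel47).mk' fc
/-- The image of `d_n` in `Q`. -/
def qd (n : ℕ) : Q47 := (conGen rel47).mk' (fd n)

/-- The P-portion `P = {a} ∪ {b^(2m) : m ≥ 1} ∪ {b^m d_n : m odd, n even, m < n}
∪ {a b^m d_n : m even, n odd, m < n}`. -/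
def P47 : Set Q47 :=
  {x | x = qa} ∪
  {x | ∃ m : ℕ, 1 ≤ m ∧ x = qb ^ (2 * m)} ∪
  {x | ∃ m n : ℕ, m % 2 = 1 ∧ n % 2 = 0 ∧ m < n ∧ x = qb ^ m * qd n} ∪
  {x | ∃ m n : ℕ, m % 2 = 0 ∧ n % 2 = 1 ∧ m < n ∧ x = qa * qb ^ m * qd n}

/-- The pretending function on single heaps for 4.7. -/
def phi47 (k : ℕ) : Q47 :=
  if k = 1 ∨ k = 3 then qa
  else if k = 2 ∨ k = 4 then qb
  else if k = 5 then qc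
  else if k = 6 then qb ^ 3
  else qd (k - 7)

/-- The pretending function extended multiplicatively to positions. -/
def Phi47 (G : Multiset ℕ) : Q47 := (G.map phi47).prod

namespace Game47

/-! ### The outcome criterion -/

/-- The weight of a heap: the exponent of `b` in the image of `Φ(H_k)` after inverting `b`. -/
def deg (k : ℕ) : ℕ := if k = 2 then 1 else k - 3

/-- The total weight of a position. -/
def tot (G : Multiset ℕ) : ℕ := (G.map deg).sum

/-- A heap `g` is visible in a position of total weight `x` when the corresponding factor `c`
(for `g = 5`) or `d_{g-7}` (for `g ≥ 7`) is not absorbed by the powers of `b`. -/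
def Vis (g x : ℕ) : Prop := (g = 5 ∧ x ≤ 2) ∨ (7 ≤ g ∧ x + 10 ≤ 2 * g)

/-- The outcome criterion, in terms of the existence `S` of a visible heap, the exponent `E`
of `a` and the total weight `D`. -/
def Good (S : Prop) (E D : ℕ) : Prop :=
  (S ∧ E % 2 = 1 ∧ D % 2 = 1) ∨
  (¬ S ∧ ((E % 2 = 1 ∧ D = 0) ∨ (E % 2 = 0 ∧ D % 2 = 0 ∧ 2 ≤ D)))

/-- The explicit description of the misère P-positions; the exponent of `a` is the number of
beans modulo 2. -/
def F (G : Multiset ℕ) : Prop := Good (∃ g ∈ G, Vis g (tot G)) G.sum (tot G)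

lemma tot_cons (k : ℕ) (R : Multiset ℕ) : tot (k ::ₘ R) = deg k + tot R := by
  simp [tot]

lemma deg_le_tot {g : ℕ} {R : Multiset ℕ} (h : g ∈ R) : deg g ≤ tot R := by
  obtain ⟨T, rfl⟩ := Multiset.exists_cons_of_mem h
  rw [tot_cons]; omega

lemma F_one (k : ℕ) (R : Multiset ℕ) : F (k ::ₘ R) ↔
    Good (Vis k (deg k + tot R) ∨ ∃ g ∈ R, Vis g (deg k + tot R)) (k + R.sum)
      (deg k + tot R) := by
  simp only [F, tot_cons, Multiset.sum_cons, Multiset.mem_cons, exists_eq_or_imp]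

lemma F_two (i j : ℕ) (R : Multiset ℕ) : F (i ::ₘ j ::ₘ R) ↔
    Good (Vis i (deg i + (deg j + tot R)) ∨ Vis j (deg i + (deg j + tot R)) ∨
      ∃ g ∈ R, Vis g (deg i + (deg j + tot R))) (i + (j + R.sum))
      (deg i + (deg j + tot R)) := by
  simp only [F, tot_cons, Multiset.sum_cons, Multiset.mem_cons, exists_eq_or_imp]

/-! ### Every move from a position satisfying the criterion violates it -/

lemma not_F_remove (R : Multiset ℕ) (h : F (1 ::ₘ R)) : ¬ F R := by
  rw [F_one] at h
  have h1 : deg 1 = 0 := rfl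
  simp only [F, Good, Vis, h1, zero_add] at *
  generalize tot R = r at *
  generalize R.sum = s at *
  grind

lemma not_F_single (k : ℕ) (hk : 2 ≤ k) (R : Multiset ℕ) (h : F (k ::ₘ R)) :
    ¬ F ((k - 1) ::ₘ R) := by
  rw [F_one] at *
  have hR : ∀ g ∈ R, deg g ≤ tot R := fun g hg => deg_le_tot hg
  have hd : (k = 3 ∧ deg k = 0 ∧ deg (k - 1) = 1) ∨
      (k ≠ 3 ∧ deg k = deg (k - 1) + 1 ∧ (k = 2 ∨ deg k + 3 = k)) := by
    simp only [deg]; split_ifs <;> omega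
  simp only [Good, Vis] at *
  generalize deg k = x at *
  generalize deg (k - 1) = y at *
  generalize tot R = r at *
  generalize R.sum = s at *
  rintro (⟨hS', he', hd'⟩ | ⟨hS', hp'⟩) <;> rcases h with (⟨hS, he, hd⟩ | ⟨hS, hp⟩)
  · omega
  · rcases hS' with hS' | ⟨g, hg, hS'⟩
    · exact hS (Or.inl (by omega))
    · exact hS (Or.inr ⟨g, hg, by omega⟩)
  · rcases hS with hS | ⟨g, hg, hS⟩
    · exact hS' (Or.inl (by omega))
    · exact hS' (Or.inr ⟨g, hg, by omega⟩)
  · omega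

lemma not_F_split (k i j : ℕ) (hi : 1 ≤ i) (hj : 1 ≤ j) (hk : i + j = k ∨ i + j + 1 = k)
    (R : Multiset ℕ) (h : F (k ::ₘ R)) : ¬ F (i ::ₘ j ::ₘ R) := by
  rw [F_one] at h
  rw [F_two]
  have hR : ∀ g ∈ R, deg g ≤ tot R := fun g hg => deg_le_tot hg
  have hspec : ∀ n, deg n = if n = 2 then 1 else n - 3 := fun n => rfl
  have hki := hspec k
  have hii := hspec i
  have hji := hspec j
  simp only [Good, Vis] at *
  generalize deg k = z at *
  generalize deg i = x at *
  generalize deg j = y at *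
  generalize tot R = r at *
  generalize R.sum = s at *
  -- Such a move preserves the parity of `E` and changes that of `D`, or conversely.
  have hpar : (z + r + k + s) % 2 ≠ (x + (y + r) + (i + (j + s))) % 2 := by
    clear h hR
    split_ifs at * <;> omega
  rintro (⟨hS', he', hd'⟩ | ⟨hS', hp'⟩) <;> rcases h with (⟨hS, he, hd⟩ | ⟨hS, hp⟩)
  · clear hS hS'; omega
  · rcases hp with hp | hp
    · rcases hS' with hS' | hS' | ⟨g, hg, hS'⟩
      · clear hS; split_ifs at * <;> omega
      · clear hS; split_ifs at * <;> omega
      · have h1 := hR g hg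
        have h2 := hspec g
        clear hS
        split_ifs at h2 <;> omega
    · clear hS hS'; omega
  · rcases hp' with hp' | hp'
    · rcases hS with hS | ⟨g, hg, hS⟩
      · clear hS'; split_ifs at * <;> omega
      · have h1 := hR g hg
        have h2 := hspec g
        clear hS'
        split_ifs at h2 <;> omega
    · clear hS hS'; omega
  · by_cases hV : k = 5 ∧ z + r ≤ 2 ∨ 7 ≤ k ∧ z + r + 10 ≤ 2 * k
    · exact hS (Or.inl hV)
    · clear hS hS' hR
      rcases hp with ⟨he, hp⟩ | ⟨he, hp, hp2⟩ <;> rcases hp' with ⟨he', hp'⟩ | ⟨he', hp', hp2'⟩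
      · omega
      · clear hpar
        split_ifs at * <;> omega
      · -- All new heaps have weight 0, so `k ≤ 7`, and `k = 5`, `k = 7` would be visible.
        have : i ≤ 3 ∧ i ≠ 2 ∧ j ≤ 3 ∧ j ≠ 2 := by
          clear hpar hV
          split_ifs at * <;> omega
        clear hii hji
        split_ifs at * <;> omega
      · omega

/-! ### From a nonempty position violating the criterion some move restores it -/

lemma Move_single (k : ℕ) (hk : 2 ≤ k) (R : Multiset ℕ) :
    Move47 (k ::ₘ R) ((k - 1) ::ₘ R) :=
  Or.inr (Or.inr (Or.inl ⟨k, by simp, hk, by simp⟩))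

lemma Move_split (k i j : ℕ) (hi : 1 ≤ i) (hj : 1 ≤ j) (hk : i + j = k ∨ i + j + 1 = k)
    (R : Multiset ℕ) : Move47 (k ::ₘ R) (i ::ₘ j ::ₘ R) := by
  rcases hk with hk | hk
  · exact Or.inl ⟨k, by simp, i, j, hi, hj, hk, by simp⟩
  · exact Or.inr (Or.inr (Or.inr ⟨k, by simp, by omega, i, j, hi, hj, by omega, by simp⟩))

lemma Move_remove (R : Multiset ℕ) : Move47 (1 ::ₘ R) R :=
  Or.inr (Or.inl ⟨by simp, by simp⟩)

lemma exists_move {G : Multiset ℕ} (h0 : G ≠ 0) (hpos : ∀ k ∈ G, 1 ≤ k) :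
    ∃ G', Move47 G G' := by
  obtain ⟨k, hk⟩ := Multiset.exists_mem_of_ne_zero h0
  obtain ⟨R, rfl⟩ := Multiset.exists_cons_of_mem hk
  rcases (hpos k hk).eq_or_lt with rfl | h
  · exact ⟨_, Move_remove R⟩
  · exact ⟨_, Move_single k h R⟩

lemma exists_max {G : Multiset ℕ} (h0 : G ≠ 0) :
    ∃ M R, G = M ::ₘ R ∧ ∀ g ∈ R, g ≤ M := by
  obtain ⟨M, hM, hmax⟩ := G.toFinset.exists_max_image id (by simpa using h0)
  obtain ⟨R, rfl⟩ := Multiset.exists_cons_of_mem (Multiset.mem_toFinset.1 hM)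
  exact ⟨M, R, rfl, fun g hg => hmax g (by simp [hg])⟩

lemma exists_deg_pos {R : Multiset ℕ} (h : 1 ≤ tot R) : ∃ g ∈ R, 1 ≤ deg g := by
  by_contra! hc
  have : tot R = 0 := by
    unfold tot
    rw [Multiset.sum_eq_zero_iff]
    intro x hx
    obtain ⟨g, hg, rfl⟩ := Multiset.mem_map.1 hx
    have := hc g hg
    omega
  omega

/-- The case of a largest heap `M ≥ 7`. Here a visible heap exists iff `M` itself is visible, that
is, iff `tot R + 7 ≤ M`. If it is visible and `D` is even, the move lowers `D` by one
keeping a heap visible where possible, and otherwise splits `M` so that no heap is visible; if `D`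
is odd, halving `M` leaves no heap visible. If no heap is visible, a move in `M` that makes `E` and
`D` even suffices. -/
lemma exists_F_large (M : ℕ) (hM : 7 ≤ M) (R : Multiset ℕ) (hmax : ∀ g ∈ R, g ≤ M)
    (h : ¬ F (M ::ₘ R)) : ∃ G', Move47 (M ::ₘ R) G' ∧ F G' := by
  have hR : ∀ g ∈ R, deg g ≤ tot R := fun g hg => deg_le_tot hg
  have hdM : deg M = M - 3 := by simp [deg]; omega
  have key : (Vis M (deg M + tot R) ∨ ∃ g ∈ R, Vis g (deg M + tot R)) ↔
      tot R + 7 ≤ M := by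
    constructor
    · rintro (h | ⟨g, hg, h⟩)
      · simp only [Vis] at h; omega
      · have := hmax g hg
        simp only [Vis] at h; omega
    · intro h
      left; simp only [Vis]; omega
  rw [F_one, key, hdM] at h
  by_cases hv : tot R + 7 ≤ M
  · rcases Nat.mod_two_eq_zero_or_one (M + R.sum) with hE | hE <;>
      rcases Nat.mod_two_eq_zero_or_one (M - 3 + tot R) with hD | hD
    · by_cases hx : tot R + 7 < M
      · refine ⟨_, Move_single M (by omega) R, ?_⟩
        rw [F_one]
        have h1 : deg (M - 1) = M - 4 := by simp only [deg]; split_ifs <;> omega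
        refine Or.inl ⟨Or.inl (Or.inr ?_), ?_, ?_⟩ <;> omega
      · -- The heap `M` is barely visible: it is split if `M = 7`, when all other heaps have
        -- weight 0, and otherwise a unit of weight is taken from another heap.
        rcases hM.eq_or_lt with rfl | hM8
        · refine ⟨_, Move_split 7 3 3 (by omega) (by omega) (by omega) R, ?_⟩
          rw [F_two]
          refine Or.inr ⟨?_, Or.inl ⟨by omega, by simp [deg]; omega⟩⟩
          rintro (h | h | ⟨g, hg, h⟩)
          · simp [Vis] at h
          · simp [Vis] at h
          · have := hR g hg
            simp only [Vis, deg] at *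
            split_ifs at * <;> omega
        · obtain ⟨k, hk, hk1⟩ := exists_deg_pos (R := R) (by omega)
          obtain ⟨T, rfl⟩ := Multiset.exists_cons_of_mem hk
          simp only [tot_cons, Multiset.sum_cons] at *
          have hk2 : 2 ≤ k := by simp only [deg] at hk1; split_ifs at hk1 <;> omega
          refine ⟨(k - 1) ::ₘ M ::ₘ T, ?_, ?_⟩
          · rw [Multiset.cons_swap]; exact Move_single k hk2 _
          rw [F_two]
          have h1 : deg (k - 1) + 1 = deg k := by
            simp only [deg] at *; split_ifs at * <;> omega
          refine Or.inl ⟨Or.inr (Or.inl (Or.inr ?_)), ?_, ?_⟩ <;> omega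
    · refine ⟨_, Move_split M (M / 2) (M - M / 2) (by omega) (by omega) (by omega) R, ?_⟩
      rw [F_two]
      refine Or.inr ⟨?_, Or.inr ?_⟩
      · rintro (h | h | ⟨g, hg, h⟩)
        · simp only [Vis, deg] at h; split_ifs at h <;> omega
        · simp only [Vis, deg] at h; split_ifs at h <;> omega
        · have := hR g hg
          simp only [Vis, deg] at *
          split_ifs at * <;> omega
      · simp only [deg]; split_ifs <;> omega
    · by_cases hx : tot R + 7 < M
      · refine ⟨_, Move_split M 1 (M - 1) (by omega) (by omega) (by omega) R, ?_⟩
        rw [F_two]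
        have h1 : deg (M - 1) = M - 4 := by simp only [deg]; split_ifs <;> omega
        have h2 : deg 1 = 0 := rfl
        refine Or.inl ⟨Or.inr (Or.inl (Or.inr ?_)), ?_, ?_⟩ <;> omega
      · refine ⟨_, Move_split M 2 (M - 3) (by omega) (by omega) (by omega) R, ?_⟩
        rw [F_two]
        refine Or.inr ⟨?_, Or.inr ?_⟩
        · rintro (h | h | ⟨g, hg, h⟩)
          · simp [Vis] at h
          · simp only [Vis, deg] at h; split_ifs at h <;> omega
          · have := hR g hg
            simp only [Vis, deg] at *
            split_ifs at * <;> omega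
        · simp only [deg]; split_ifs <;> omega
    · exact absurd (Or.inl ⟨hv, hE, hD⟩) h
  · rcases Nat.mod_two_eq_zero_or_one (M + R.sum) with hE | hE <;>
      rcases Nat.mod_two_eq_zero_or_one (M - 3 + tot R) with hD | hD
    · exact absurd (Or.inr ⟨hv, Or.inr ⟨hE, hD, by omega⟩⟩) h
    · refine ⟨_, Move_split M 1 (M - 1) (by omega) (by omega) (by omega) R, ?_⟩
      rw [F_two]
      refine Or.inr ⟨?_, Or.inr ?_⟩
      · rintro (h | h | ⟨g, hg, h⟩)
        · simp [Vis] at h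
        · simp only [Vis, deg] at h; split_ifs at h <;> omega
        · have := hR g hg
          have := hmax g hg
          simp only [Vis, deg] at *
          split_ifs at * <;> omega
      · simp only [deg]; split_ifs <;> omega
    · refine ⟨_, Move_split M 2 (M - 3) (by omega) (by omega) (by omega) R, ?_⟩
      rw [F_two]
      refine Or.inr ⟨?_, Or.inr ?_⟩
      · rintro (h | h | ⟨g, hg, h⟩)
        · simp [Vis] at h
        · simp only [Vis, deg] at h; split_ifs at h <;> omega
        · have := hR g hg
          have := hmax g hg
          simp only [Vis, deg] at *
          split_ifs at * <;> omega
      · simp only [deg]; split_ifs <;> omega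
    · refine ⟨_, Move_single M (by omega) R, ?_⟩
      rw [F_one]
      refine Or.inr ⟨?_, Or.inr ?_⟩
      · rintro (h | ⟨g, hg, h⟩)
        · simp only [Vis, deg] at h; split_ifs at h <;> omega
        · have := hR g hg
          have := hmax g hg
          simp only [Vis, deg] at *
          split_ifs at * <;> omega
      · simp only [deg]; split_ifs <;> omega

/-- Membership in the invisible part of the criterion after a split into small heaps. -/
lemma F_split_small (i j : ℕ) (R : Multiset ℕ) (hi : i ≤ 4) (hj : j ≤ 4)
    (hmax : ∀ g ∈ R, g ≤ 6) (h5 : 5 ∈ R → 3 ≤ deg i + deg j + tot R)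
    (h : ((i + j + R.sum) % 2 = 1 ∧ deg i + deg j + tot R = 0) ∨
      ((i + j + R.sum) % 2 = 0 ∧ (deg i + deg j + tot R) % 2 = 0 ∧
        2 ≤ deg i + deg j + tot R)) : F (i ::ₘ j ::ₘ R) := by
  rw [F_two, ← add_assoc, ← add_assoc]
  refine Or.inr ⟨?_, h⟩
  rintro (h | h | ⟨g, hg, h⟩)
  · simp only [Vis] at h; omega
  · simp only [Vis] at h; omega
  · have := hmax g hg
    rcases h with ⟨rfl, h⟩ | h
    · have := h5 hg; omega
    · omega

/-- Membership in the invisible part of the criterion after a move to a single small heap. -/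
lemma F_single_small (i : ℕ) (R : Multiset ℕ) (hi : i ≤ 6)
    (hmax : ∀ g ∈ R, g ≤ 6) (h5 : i = 5 ∨ 5 ∈ R → 3 ≤ deg i + tot R)
    (h : ((i + R.sum) % 2 = 1 ∧ deg i + tot R = 0) ∨
      ((i + R.sum) % 2 = 0 ∧ (deg i + tot R) % 2 = 0 ∧ 2 ≤ deg i + tot R)) :
    F (i ::ₘ R) := by
  rw [F_one]
  refine Or.inr ⟨?_, h⟩
  rintro (h | ⟨g, hg, h⟩)
  · rcases h with ⟨rfl, h⟩ | h
    · have := h5 (Or.inl rfl); omega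
    · omega
  · have := hmax g hg
    rcases h with ⟨rfl, h⟩ | h
    · have := h5 (Or.inr hg); omega
    · omega

/-- The case of a largest heap of size at most 6: only heaps of size 5 can be visible, and a move
to the part of the criterion without visible heaps always exists. -/
lemma exists_F_small (M : ℕ) (hM1 : 1 ≤ M) (hM : M ≤ 6) (R : Multiset ℕ)
    (hpos : ∀ g ∈ R, 1 ≤ g) (hmax : ∀ g ∈ R, g ≤ M)
    (h : ¬ F (M ::ₘ R)) : ∃ G', Move47 (M ::ₘ R) G' ∧ F G' := by
  have h6 : ∀ g ∈ R, g ≤ 6 := fun g hg => (hmax g hg).trans hM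
  -- `t` records whether another heap of size 5 is present, so that the cases are linear.
  obtain ⟨t, ht, ht5⟩ : ∃ t : ℕ, (5 ∈ R ↔ t = 1) ∧ (t = 1 → 5 ≤ M ∧ 2 ≤ tot R) := by
    by_cases hm : 5 ∈ R
    · exact ⟨1, by simp [hm], fun _ => ⟨hmax 5 hm, deg_le_tot hm⟩⟩
    · exact ⟨0, by simp [hm], by simp⟩
  have hF : ∀ x, deg M = x → ¬ ((M = 5 ∨ t = 1 → 3 ≤ x + tot R) ∧
      (((M + R.sum) % 2 = 1 ∧ x + tot R = 0) ∨
        ((M + R.sum) % 2 = 0 ∧ (x + tot R) % 2 = 0 ∧ 2 ≤ x + tot R))) := by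
    rintro x rfl ⟨h1, h2⟩
    exact h (F_single_small M R hM h6 (by rwa [ht]) h2)
  have split : ∀ i j x y : ℕ, deg i = x → deg j = y →
      (1 ≤ i ∧ 1 ≤ j ∧ (i + j = M ∨ i + j + 1 = M) ∧ i ≤ 4 ∧ j ≤ 4 ∧
        (t = 1 → 3 ≤ x + y + tot R) ∧
        (((i + j + R.sum) % 2 = 1 ∧ x + y + tot R = 0) ∨
        ((i + j + R.sum) % 2 = 0 ∧ (x + y + tot R) % 2 = 0 ∧ 2 ≤ x + y + tot R))) →
      ∃ G', Move47 (M ::ₘ R) G' ∧ F G' := by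
    rintro i j x y rfl rfl ⟨hi, hj, hk, hi4, hj4, a, b⟩
    exact ⟨_, Move_split M i j hi hj hk R, F_split_small i j R hi4 hj4 h6 (by rwa [ht]) b⟩
  have single : ∀ i x : ℕ, deg i = x →
      (1 ≤ i ∧ M = i + 1 ∧ (i = 5 ∨ t = 1 → 3 ≤ x + tot R) ∧
        (((i + R.sum) % 2 = 1 ∧ x + tot R = 0) ∨
        ((i + R.sum) % 2 = 0 ∧ (x + tot R) % 2 = 0 ∧ 2 ≤ x + tot R))) →
      ∃ G', Move47 (M ::ₘ R) G' ∧ F G' := by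
    rintro i x rfl ⟨hi, rfl, a, b⟩
    exact ⟨_, Move_single (i + 1) (by omega) R,
      F_single_small i R (by omega) h6 (by rwa [ht]) b⟩
  obtain rfl | rfl | rfl | rfl | rfl | rfl :
      M = 1 ∨ M = 2 ∨ M = 3 ∨ M = 4 ∨ M = 5 ∨ M = 6 := by omega
  · have hF := hF 0 rfl
    have h0 : tot R = 0 := by
      by_contra hc
      obtain ⟨g, hg, hg1⟩ := exists_deg_pos (R := R) (by omega)
      obtain rfl : g = 1 := le_antisymm (hmax g hg) (hpos g hg)
      exact absurd hg1 (by decide)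
    refine ⟨R, Move_remove R, Or.inr ⟨?_, Or.inl ⟨by omega, h0⟩⟩⟩
    rintro ⟨g, hg, hv⟩
    have := hmax g hg
    simp only [Vis] at hv; omega
  · have hF := hF 1 rfl
    rcases Nat.mod_two_eq_zero_or_one R.sum with hE | hE
    · rcases (tot R).eq_zero_or_pos with h0 | h0
      · exact single 1 0 rfl (by omega)
      · exact split 1 1 0 0 rfl rfl (by omega)
    · by_cases hD : (tot R) % 2 = 0
      · rcases (tot R).eq_zero_or_pos with h0 | h0
        · exact split 1 1 0 0 rfl rfl (by omega)
        · exact single 1 0 rfl (by omega)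
      · -- The number of beans is odd, so a heap of size 1 is present.
        have h1 : 1 ∈ R := by
          by_contra hc
          have h2 : ∀ g ∈ R, g = 2 := fun g hg => by
            have := hpos g hg
            have := hmax g hg
            have : g ≠ 1 := fun h => hc (h ▸ hg)
            omega
          rw [Multiset.eq_replicate_card.2 h2] at hE
          simp at hE
        obtain ⟨T, rfl⟩ := Multiset.exists_cons_of_mem h1
        refine ⟨2 ::ₘ T, by rw [Multiset.cons_swap]; exact Move_remove _, ?_⟩
        have d1 : deg 1 = 0 := rfl
        have d2 : deg 2 = 1 := rfl
        simp only [tot_cons, Multiset.sum_cons, Multiset.mem_cons] at *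
        refine F_single_small 2 T (by omega) (fun g hg => h6 g (.inr hg)) ?_ (by omega)
        rintro (h | h)
        · omega
        · have := hmax 5 (.inr h); omega
  · have hF := hF 0 rfl
    rcases Nat.mod_two_eq_zero_or_one R.sum with hE | hE <;>
      rcases Nat.mod_two_eq_zero_or_one (tot R) with hD | hD
    · exact split 1 1 0 0 rfl rfl (by omega)
    · exact single 2 1 rfl (by omega)
    · exact split 1 1 0 0 rfl rfl (by omega)
    · exact split 1 2 0 1 rfl rfl (by omega)
  · have hF := hF 1 rfl
    rcases Nat.mod_two_eq_zero_or_one R.sum with hE | hE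
    · rcases (tot R).eq_zero_or_pos with h0 | h0
      · exact single 3 0 rfl (by omega)
      · exact split 1 3 0 0 rfl rfl (by omega)
    · by_cases hD : (tot R) % 2 = 0
      · rcases (tot R).eq_zero_or_pos with h0 | h0
        · exact split 1 3 0 0 rfl rfl (by omega)
        · exact single 3 0 rfl (by omega)
      · exact split 1 2 0 1 rfl rfl (by omega)
  · have hF := hF 2 rfl
    rcases Nat.mod_two_eq_zero_or_one R.sum with hE | hE <;>
      rcases Nat.mod_two_eq_zero_or_one (tot R) with hD | hD
    · exact split 2 2 1 1 rfl rfl (by omega)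
    · exact single 4 1 rfl (by omega)
    · exact split 1 3 0 0 rfl rfl (by omega)
    · exact split 1 4 0 1 rfl rfl (by omega)
  · have hF := hF 3 rfl
    rcases Nat.mod_two_eq_zero_or_one R.sum with hE | hE
    · exact split 2 4 1 1 rfl rfl (by omega)
    · by_cases hD : (tot R) % 2 = 0
      · rcases (tot R).eq_zero_or_pos with h0 | h0
        · exact split 3 3 0 0 rfl rfl (by omega)
        · exact single 5 2 rfl (by omega)
      · exact split 1 4 0 1 rfl rfl (by omega)

lemma exists_F {G : Multiset ℕ} (h0 : G ≠ 0) (hpos : ∀ k ∈ G, 1 ≤ k) (h : ¬ F G) :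
    ∃ G', Move47 G G' ∧ F G' := by
  obtain ⟨M, R, rfl, hmax⟩ := exists_max h0
  rcases Nat.lt_or_ge M 7 with hM | hM
  · exact exists_F_small M (hpos M (by simp)) (by omega) R
      (fun g hg => hpos g (by simp [hg])) hmax h
  · exact exists_F_large M hM R hmax h

/-! ### The criterion describes the P-positions -/

/-- A measure that every move decreases: each bean counts twice, each heap counts `-1`. -/
def size (G : Multiset ℕ) : ℕ := (G.map fun k => 2 * k - 1).sum

lemma size_cons (k : ℕ) (R : Multiset ℕ) : size (k ::ₘ R) = (2 * k - 1) + size R := by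
  simp [size]

lemma Move_cases {G G' : Multiset ℕ} (h : Move47 G G') :
    ∃ k R, G = k ::ₘ R ∧
      ((k = 1 ∧ G' = R) ∨ (2 ≤ k ∧ G' = (k - 1) ::ₘ R) ∨
        ∃ i j, 1 ≤ i ∧ 1 ≤ j ∧ (i + j = k ∨ i + j + 1 = k) ∧ G' = i ::ₘ j ::ₘ R) := by
  rcases h with ⟨k, hk, i, j, hi, hj, hij, rfl⟩ | ⟨hk, rfl⟩ | ⟨k, hk, h2, rfl⟩ |
    ⟨k, hk, h3, i, j, hi, hj, hij, rfl⟩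
  · exact ⟨k, _, (Multiset.cons_erase hk).symm, .inr (.inr ⟨i, j, hi, hj, .inl hij, rfl⟩)⟩
  · exact ⟨1, _, (Multiset.cons_erase hk).symm, .inl ⟨rfl, rfl⟩⟩
  · exact ⟨k, _, (Multiset.cons_erase hk).symm, .inr (.inl ⟨h2, rfl⟩)⟩
  · exact ⟨k, _, (Multiset.cons_erase hk).symm,
      .inr (.inr ⟨i, j, hi, hj, .inr (by omega), rfl⟩)⟩

lemma size_lt {G G' : Multiset ℕ} (h : Move47 G G') : size G' < size G := by
  obtain ⟨k, R, rfl, ⟨rfl, rfl⟩ | ⟨h2, rfl⟩ | ⟨i, j, hi, hj, hij, rfl⟩⟩ := Move_cases h <;>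
    simp only [size_cons] <;> omega

lemma pos_move {G G' : Multiset ℕ} (h : Move47 G G') (hpos : ∀ k ∈ G, 1 ≤ k) :
    ∀ k ∈ G', 1 ≤ k := by
  obtain ⟨k, R, rfl, ⟨rfl, rfl⟩ | ⟨h2, rfl⟩ | ⟨i, j, hi, hj, hij, rfl⟩⟩ := Move_cases h <;>
    simp only [Multiset.forall_mem_cons] at * <;> refine_lift ?_
  · exact hpos.2
  · exact ⟨by omega, hpos.2⟩
  · exact ⟨hi, hj, hpos.2⟩

lemma not_F_move {G G' : Multiset ℕ} (h : Move47 G G') (hF : F G) : ¬ F G' := by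
  obtain ⟨k, R, rfl, ⟨rfl, rfl⟩ | ⟨h2, rfl⟩ | ⟨i, j, hi, hj, hij, rfl⟩⟩ := Move_cases h
  · exact not_F_remove _ hF
  · exact not_F_single k h2 R hF
  · exact not_F_split k i j hi hj hij R hF

lemma not_F_zero : ¬ F 0 := by
  simp [F, Good, tot]

theorem PP_iff_F (PP : Multiset ℕ → Prop)
    (hPP : ∀ G : Multiset ℕ,
      PP G ↔ ((∃ G', Move47 G G') ∧ ∀ G', Move47 G G' → ¬ PP G'))
    (G : Multiset ℕ) (hpos : ∀ k ∈ G, 1 ≤ k) : PP G ↔ F G := by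
  induction hn : size G using Nat.strong_induction_on generalizing G with
  | _ n ih =>
    subst hn
    have ih' : ∀ G', Move47 G G' → (PP G' ↔ F G') := fun G' h =>
      ih _ (size_lt h) G' (pos_move h hpos) rfl
    rw [hPP]
    constructor
    · rintro ⟨⟨G₁, h₁⟩, hall⟩
      by_contra hF
      have h0 : G ≠ 0 := by
        rintro rfl
        simp [Move47] at h₁
      obtain ⟨G', hm, hF'⟩ := exists_F h0 hpos hF
      exact hall G' hm ((ih' G' hm).2 hF')
    · intro hF
      have h0 : G ≠ 0 := fun h => not_F_zero (h ▸ hF)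
      exact ⟨exists_move h0 hpos, fun G' hm hP => not_F_move hm hF ((ih' G' hm).1 hP)⟩

/-! ### Invariants of words -/

/-- The exponent of `b` attached to a generator once `b` is inverted. -/
def gdeg : Gen47 → ℕ
  | .a => 0
  | .b => 1
  | .c => 2
  | .d n => n + 4

/-- The exponent of `a` attached to a generator once `b` is inverted. -/
def gpar : Gen47 → ℕ
  | .a => 1
  | .b => 0
  | .c => 1
  | .d n => n + 1

/-- A factor of a word of total weight `x` that is not absorbed by the powers of `b`. -/
def GVis : Gen47 → ℕ → Prop
  | .a, _ => False
  | .b, _ => False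
  | .c, x => x ≤ 2
  | .d n, x => x ≤ 2 * n + 4

lemma GVis_mono {g : Gen47} {x y : ℕ} (hxy : x ≤ y) (h : GVis g y) : GVis g x := by
  cases g <;> simp only [GVis] at * <;> omega

/-- Total weight of a word. -/
def wdeg (x : FM47) : ℕ := (x.toAdd.map gdeg).sum

/-- Exponent of `a` of a word. -/
def wpar (x : FM47) : ℕ := (x.toAdd.map gpar).sum

/-- `g` occurs in the word `x` and is not absorbed. -/
def WVis (x : FM47) (g : Gen47) : Prop := g ∈ x.toAdd ∧ GVis g (wdeg x)

lemma wdeg_mul (x y : FM47) : wdeg (x * y) = wdeg x + wdeg y := by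
  simp [wdeg]
lemma wpar_mul (x y : FM47) : wpar (x * y) = wpar x + wpar y := by
  simp [wpar]
lemma wdeg_pow (x : FM47) (n : ℕ) : wdeg (x ^ n) = n * wdeg x := by
  simp [wdeg, Multiset.map_nsmul, Multiset.sum_nsmul]
lemma wpar_pow (x : FM47) (n : ℕ) : wpar (x ^ n) = n * wpar x := by
  simp [wpar, Multiset.map_nsmul, Multiset.sum_nsmul]
lemma wdeg_gen (g : Gen47) : wdeg (fgen47 g) = gdeg g := by simp [wdeg, fgen47]
lemma wpar_gen (g : Gen47) : wpar (fgen47 g) = gpar g := by simp [wpar, fgen47]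
lemma mem_mul (g : Gen47) (x y : FM47) : g ∈ (x * y).toAdd ↔ g ∈ x.toAdd ∨ g ∈ y.toAdd := by
  simp
lemma mem_pow (g : Gen47) (x : FM47) (n : ℕ) :
    g ∈ (x ^ n).toAdd ↔ n ≠ 0 ∧ g ∈ x.toAdd := by
  simp [Multiset.mem_nsmul]
lemma mem_gen (g h : Gen47) : g ∈ (fgen47 h).toAdd ↔ g = h := by simp [fgen47]

lemma wdeg_one : wdeg 1 = 0 := by simp [wdeg]
lemma wpar_one : wpar 1 = 0 := by simp [wpar]
lemma mem_one (g : Gen47) : ¬ g ∈ (1 : FM47).toAdd := by simp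

/-- The congruence identifying words with the same invariants. -/
def invCon : Con FM47 where
  r x y := wdeg x = wdeg y ∧ wpar x % 2 = wpar y % 2 ∧ ∀ g, WVis x g ↔ WVis y g
  iseqv :=
    { refl := fun _ => ⟨rfl, rfl, fun _ => Iff.rfl⟩
      symm := fun h => ⟨h.1.symm, h.2.1.symm, fun g => (h.2.2 g).symm⟩
      trans := fun h k => ⟨h.1.trans k.1, h.2.1.trans k.2.1,
        fun g => (h.2.2 g).trans (k.2.2 g)⟩ }
  mul' := by
    rintro x x' y y' ⟨h1, h2, h3⟩ ⟨k1, k2, k3⟩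
    refine ⟨by rw [wdeg_mul, wdeg_mul, h1, k1], by rw [wpar_mul, wpar_mul]; omega, fun g => ?_⟩
    have h3 := h3 g
    have k3 := k3 g
    simp only [WVis, mem_mul, wdeg_mul, h1, k1] at *
    have e1 : GVis g (wdeg x' + wdeg y') → GVis g (wdeg x') := GVis_mono (by omega)
    have e2 : GVis g (wdeg x' + wdeg y') → GVis g (wdeg y') := GVis_mono (by omega)
    tauto

/-- The invariants of a word depend only on its class in `Q`. -/
lemma rel_le : conGen rel47 ≤ invCon := by
  rw [Con.conGen_le]
  rintro x y (⟨rfl, rfl⟩ | ⟨rfl, rfl⟩ | ⟨rfl, rfl⟩ | ⟨n, rfl, rfl⟩ | ⟨n, rfl, rfl⟩ |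
    ⟨m, n, hmn, rfl, rfl⟩) <;>
  · refine ⟨?_, ?_, ?_⟩
    · simp only [fa, fb, fc, fd, wdeg_mul, wdeg_pow, wdeg_gen, wdeg_one, gdeg]
      try omega
    · simp only [fa, fb, fc, fd, wpar_mul, wpar_pow, wpar_gen, wpar_one, gpar]
      try omega
    · intro g
      simp only [WVis, fa, fb, fc, fd, wdeg_mul, wdeg_pow, wdeg_gen, wdeg_one, gdeg,
        mem_mul, mem_pow, mem_gen, mem_one]
      cases g <;> simp [GVis] <;> omega

/-- The outcome criterion on words. -/
def WF (x : FM47) : Prop := Good (∃ g, WVis x g) (wpar x) (wdeg x)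

/-- The class of a word in `Q`. -/
def cls : FM47 →* Q47 := (conGen rel47).mk'

lemma cls_eq_iff {x y : FM47} : cls x = cls y ↔ conGen rel47 x y := Con.eq _

lemma WF_congr {x y : FM47} (h : cls x = cls y) : WF x ↔ WF y := by
  obtain ⟨h1, h2, h3⟩ := rel_le (cls_eq_iff.1 h)
  simp only [WF, Good, h1, h2, h3]

/-! ### Relations and normal forms in `Q` -/

lemma qa_sq : qa ^ 2 = 1 :=
  (map_pow cls fa 2).symm.trans
    ((cls_eq_iff.2 (ConGen.Rel.of _ _ (Or.inl ⟨rfl, rfl⟩))).trans (map_one cls))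

lemma cls_a : cls fa = qa := rfl
lemma cls_b : cls fb = qb := rfl
lemma cls_c : cls fc = qc := rfl
lemma cls_d (n : ℕ) : cls (fd n) = qd n := rfl

lemma qb_qc : qb * qc = qa * qb ^ 3 := by
  have : cls (fb * fc) = cls (fa * fb ^ 3) :=
    cls_eq_iff.2 (ConGen.Rel.of _ _ (.inr (.inl ⟨rfl, rfl⟩)))
  simpa only [map_mul, map_pow, cls_a, cls_b, cls_c] using this

lemma qc_sq : qc ^ 2 = qb ^ 4 := by
  have : cls (fc ^ 2) = cls (fb ^ 4) :=
    cls_eq_iff.2 (ConGen.Rel.of _ _ (.inr (.inr (.inl ⟨rfl, rfl⟩))))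
  simpa only [map_mul, map_pow, cls_a, cls_b, cls_c] using this

lemma qb_qd (n : ℕ) : qb ^ (n + 1) * qd n = qa ^ (n + 1) * qb ^ (2 * n + 5) := by
  have : cls (fb ^ (n + 1) * fd n) = cls (fa ^ (n + 1) * fb ^ (2 * n + 5)) :=
    cls_eq_iff.2 (ConGen.Rel.of _ _ (.inr (.inr (.inr (.inl ⟨n, rfl, rfl⟩)))))
  simpa only [map_mul, map_pow, cls_a, cls_b, cls_d] using this

lemma qc_qd (n : ℕ) : qc * qd n = qa * qb ^ 2 * qd n := by
  have : cls (fc * fd n) = cls (fa * fb ^ 2 * fd n) :=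
    cls_eq_iff.2 (ConGen.Rel.of _ _ (.inr (.inr (.inr (.inr (.inl ⟨n, rfl, rfl⟩))))))
  simpa only [map_mul, map_pow, cls_a, cls_b, cls_c, cls_d] using this

lemma qd_qd {m n : ℕ} (h : m ≤ n) : qd m * qd n = qa ^ (m + 1) * qb ^ (m + 4) * qd n := by
  have : cls (fd m * fd n) = cls (fa ^ (m + 1) * fb ^ (m + 4) * fd n) :=
    cls_eq_iff.2 (ConGen.Rel.of _ _ (.inr (.inr (.inr (.inr (.inr ⟨m, n, h, rfl, rfl⟩))))))
  simpa only [map_mul, map_pow, cls_a, cls_b, cls_d] using this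

/-- Words in normal form: `a^e b^m`, `a^e c`, or `a^e b^m d_n` with `m ≤ n`. -/
inductive Normal : FM47 → Prop
  | pow (e m : ℕ) : Normal (fa ^ e * fb ^ m)
  | c (e : ℕ) : Normal (fa ^ e * fc)
  | d (e m n : ℕ) (h : m ≤ n) : Normal (fa ^ e * fb ^ m * fd n)

/-- The elements of `Q` represented by a normal word. -/
def HasNF (q : Q47) : Prop := ∃ x, Normal x ∧ q = cls x

lemma hasNF_pow (e m : ℕ) : HasNF (qa ^ e * qb ^ m) := ⟨_, .pow e m, by simp; rfl⟩

lemma hasNF_c (e : ℕ) : HasNF (qa ^ e * qc) := ⟨_, .c e, by simp; rfl⟩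

lemma hasNF_d (e m n : ℕ) : HasNF (qa ^ e * qb ^ m * qd n) := by
  rcases Nat.lt_or_ge n m with h | h
  · obtain ⟨k, rfl⟩ := Nat.exists_eq_add_of_lt h
    have : qa ^ e * qb ^ (n + k + 1) * qd n =
        qa ^ (e + (n + 1)) * qb ^ (k + (2 * n + 5)) := by
      calc _ = qa ^ e * qb ^ k * (qb ^ (n + 1) * qd n) := by
            rw [show n + k + 1 = k + (n + 1) by ring, pow_add qb]; ac_rfl
        _ = _ := by rw [qb_qd, pow_add qa e, pow_add qb k]; ac_rfl
    rw [this]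
    exact hasNF_pow _ _
  · exact ⟨_, .d e m n h, by simp; rfl⟩

lemma hasNF_mul_gen (q : Q47) (hq : HasNF q) (g : Gen47) : HasNF (cls (fgen47 g) * q) := by
  obtain ⟨x, hx, rfl⟩ := hq
  cases g with
  | a =>
    change HasNF (qa * _)
    cases hx with
    | pow e m =>
      convert hasNF_pow (e + 1) m using 1
      simp only [map_mul, map_pow, cls_a, cls_b, pow_succ]; ac_rfl
    | c e =>
      convert hasNF_c (e + 1) using 1
      simp only [map_mul, map_pow, cls_a, cls_c, pow_succ]; ac_rfl
    | d e m n h =>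
      convert hasNF_d (e + 1) m n using 1
      simp only [map_mul, map_pow, cls_a, cls_b, cls_d, pow_succ]; ac_rfl
  | b =>
    change HasNF (qb * _)
    cases hx with
    | pow e m =>
      convert hasNF_pow e (m + 1) using 1
      simp only [map_mul, map_pow, cls_a, cls_b, pow_succ]; ac_rfl
    | c e =>
      convert hasNF_pow (e + 1) 3 using 1
      simp only [map_mul, map_pow, cls_a, cls_c]
      rw [mul_left_comm, qb_qc, pow_succ qa]; ac_rfl
    | d e m n h =>
      convert hasNF_d e (m + 1) n using 1
      simp only [map_mul, map_pow, cls_a, cls_b, cls_d, pow_succ]; ac_rfl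
  | c =>
    change HasNF (qc * _)
    cases hx with
    | pow e m =>
      cases m with
      | zero =>
        convert hasNF_c e using 1
        simp only [map_pow, cls_a, pow_zero, mul_one]; ac_rfl
      | succ m =>
        convert hasNF_pow (e + 1) (m + 3) using 1
        simp only [map_mul, map_pow, cls_a, cls_b]
        calc _ = qa ^ e * qb ^ m * (qb * qc) := by rw [pow_succ qb]; ac_rfl
          _ = _ := by rw [qb_qc, pow_succ qa, pow_add qb]; ac_rfl
    | c e =>
      convert hasNF_pow e 4 using 1
      simp only [map_mul, map_pow, cls_a, cls_c]
      rw [← qc_sq, pow_two]; ac_rfl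
    | d e m n h =>
      convert hasNF_d (e + 1) (m + 2) n using 1
      simp only [map_mul, map_pow, cls_a, cls_b, cls_d]
      calc _ = qa ^ e * qb ^ m * (qc * qd n) := by ac_rfl
        _ = _ := by rw [qc_qd, pow_succ qa, pow_add qb]; ac_rfl
  | d k =>
    change HasNF (qd k * _)
    cases hx with
    | pow e m =>
      convert hasNF_d e m k using 1
      simp only [map_mul, map_pow, cls_a, cls_b]; ac_rfl
    | c e =>
      convert hasNF_d (e + 1) 2 k using 1
      simp only [map_mul, map_pow, cls_a, cls_c]
      calc _ = qa ^ e * (qc * qd k) := by ac_rfl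
        _ = _ := by rw [qc_qd, pow_succ qa]; ac_rfl
    | d e m n h =>
      rcases le_total k n with hk | hk
      · convert hasNF_d (e + (k + 1)) (m + (k + 4)) n using 1
        simp only [map_mul, map_pow, cls_a, cls_b, cls_d]
        calc _ = qa ^ e * qb ^ m * (qd k * qd n) := by ac_rfl
          _ = _ := by rw [qd_qd hk, pow_add qa e, pow_add qb m]; ac_rfl
      · convert hasNF_d (e + (n + 1)) (m + (n + 4)) k using 1
        simp only [map_mul, map_pow, cls_a, cls_b, cls_d]
        calc _ = qa ^ e * qb ^ m * (qd n * qd k) := by ac_rfl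
          _ = _ := by rw [qd_qd hk, pow_add qa e, pow_add qb m]; ac_rfl

lemma hasNF_cls (x : FM47) : HasNF (cls x) := by
  induction h : x.toAdd using Multiset.induction_on generalizing x with
  | empty =>
    have : x = 1 := h
    subst this
    convert hasNF_pow 0 0 using 1
    simp
  | cons g s ih =>
    have : x = fgen47 g * Multiplicative.ofAdd s := by
      apply Multiplicative.toAdd.injective
      rw [h]; simp [fgen47]
    rw [this, map_mul]
    exact hasNF_mul_gen _ (ih _ rfl) g

/-! ### Comparison with the P-portion -/

lemma qa_pow (e : ℕ) : qa ^ e = qa ^ (e % 2) := by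
  conv_lhs => rw [← Nat.div_add_mod e 2, pow_add, pow_mul, qa_sq, one_pow, one_mul]

lemma mem_P_of_normal {x : FM47} (hx : Normal x) (h : WF x) : cls x ∈ P47 := by
  cases hx with
  | pow e m =>
    have hv : ¬ ∃ g, WVis (fa ^ e * fb ^ m) g := by
      rintro ⟨g, hg, hg'⟩
      simp only [fa, fb, mem_mul, mem_pow, mem_gen] at hg
      rcases hg with ⟨_, rfl⟩ | ⟨_, rfl⟩ <;> exact hg'
    simp only [WF, Good, hv, false_and, not_false_iff, true_and, false_or] at h
    simp only [fa, fb, wdeg_mul, wdeg_pow, wdeg_gen, gdeg, wpar_mul, wpar_pow, wpar_gen,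
      gpar, mul_zero, mul_one, zero_add, add_zero] at h
    simp only [map_mul, map_pow, cls_a, cls_b]
    rw [qa_pow]
    rcases h with ⟨he, rfl⟩ | ⟨he, hm, h2⟩
    · exact .inl (.inl (.inl (by simp [he])))
    · exact .inl (.inl (.inr ⟨m / 2, by omega, by
        rw [he, show 2 * (m / 2) = m by omega]; simp⟩))
  | c e =>
    have hv : ∃ g, WVis (fa ^ e * fc) g :=
      ⟨.c, by simp [fc, mem_mul, mem_gen, -toAdd_mul],
        by simp [fa, fc, wdeg_mul, wdeg_pow, wdeg_gen, gdeg, GVis]⟩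
    simp only [WF, Good, hv, not_true, false_and, true_and, or_false] at h
    simp [fa, fc, wdeg_mul, wdeg_pow, wdeg_gen, gdeg] at h
  | d e m n hmn =>
    have hv : ∃ g, WVis (fa ^ e * fb ^ m * fd n) g :=
      ⟨.d n, by simp [fd, mem_mul, mem_gen, -toAdd_mul],
        by simp [fa, fb, fd, wdeg_mul, wdeg_pow, wdeg_gen, gdeg, GVis]; omega⟩
    simp only [WF, Good, hv, not_true, false_and, true_and, or_false] at h
    simp only [fa, fb, fd, wdeg_mul, wdeg_pow, wdeg_gen, gdeg, wpar_mul, wpar_pow, wpar_gen,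
      gpar, mul_zero, mul_one, zero_add, add_zero] at h
    simp only [map_mul, map_pow, cls_a, cls_b, cls_d]
    rw [qa_pow]
    rcases Nat.mod_two_eq_zero_or_one n with hn | hn
    · refine .inl (.inr ⟨m, n, by omega, hn, by omega, ?_⟩)
      rw [show e % 2 = 0 by omega]; simp
    · refine .inr ⟨m, n, by omega, hn, by omega, ?_⟩
      rw [show e % 2 = 1 by omega]; simp

lemma WF_of_mem_P {x : FM47} (h : cls x ∈ P47) : WF x := by
  rcases h with ((h | ⟨m, hm, h⟩) | ⟨m, n, hm, hn, hmn, h⟩) | ⟨m, n, hm, hn, hmn, h⟩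
  · have h : cls x = cls fa := h
    rw [WF_congr h]
    refine Or.inr ⟨?_, Or.inl ⟨?_, ?_⟩⟩
    · rintro ⟨g, hg, hg'⟩
      rw [fa, mem_gen] at hg; subst hg; exact hg'
    · simp [fa, wpar_gen, gpar]
    · simp [fa, wdeg_gen, gdeg]
  · have h : cls x = cls (fb ^ (2 * m)) := by rw [h, map_pow, cls_b]
    rw [WF_congr h]
    refine Or.inr ⟨?_, Or.inr ⟨?_, ?_, ?_⟩⟩
    · rintro ⟨g, hg, hg'⟩
      rw [fb, mem_pow, mem_gen] at hg; obtain ⟨_, rfl⟩ := hg; exact hg'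
    · simp [fb, wpar_pow, wpar_gen, gpar]
    · simp [fb, wdeg_pow, wdeg_gen, gdeg]
    · simp [fb, wdeg_pow, wdeg_gen, gdeg]; omega
  · have h : cls x = cls (fb ^ m * fd n) := by rw [h, map_mul, map_pow, cls_b, cls_d]
    rw [WF_congr h]
    refine Or.inl ⟨⟨.d n, ?_, ?_⟩, ?_, ?_⟩
    · rw [mem_mul, fd, mem_gen]; simp
    · simp [fb, fd, wdeg_mul, wdeg_pow, wdeg_gen, gdeg, GVis]; omega
    · simp [fb, fd, wpar_mul, wpar_pow, wpar_gen, gpar]; omega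
    · simp [fb, fd, wdeg_mul, wdeg_pow, wdeg_gen, gdeg]; omega
  · have h : cls x = cls (fa * fb ^ m * fd n) := by
      rw [h, map_mul, map_mul, map_pow, cls_a, cls_b, cls_d]
    rw [WF_congr h]
    refine Or.inl ⟨⟨.d n, ?_, ?_⟩, ?_, ?_⟩
    · rw [mem_mul, fd, mem_gen]; simp
    · simp [fa, fb, fd, wdeg_mul, wdeg_pow, wdeg_gen, gdeg, GVis]; omega
    · simp [fa, fb, fd, wpar_mul, wpar_pow, wpar_gen, gpar]; omega
    · simp [fa, fb, fd, wdeg_mul, wdeg_pow, wdeg_gen, gdeg]; omega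

lemma mem_P_iff (x : FM47) : cls x ∈ P47 ↔ WF x := by
  refine ⟨WF_of_mem_P, fun h => ?_⟩
  obtain ⟨y, hy, e⟩ := hasNF_cls x
  rw [e]
  exact mem_P_of_normal hy ((WF_congr e).1 h)

/-! ### Positions as words -/

/-- A word representing `Φ` of a single heap. -/
def word (k : ℕ) : FM47 :=
  if k = 1 ∨ k = 3 then fa
  else if k = 2 ∨ k = 4 then fb
  else if k = 5 then fc
  else if k = 6 then fb ^ 3
  else fd (k - 7)

lemma cls_word (k : ℕ) : cls (word k) = phi47 k := by
  unfold word phi47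
  split_ifs <;> rfl

lemma wdeg_word {k : ℕ} (hk : 1 ≤ k) : wdeg (word k) = deg k := by
  unfold word deg
  split_ifs <;> simp only [fa, fb, fc, fd, wdeg_pow, wdeg_gen, gdeg] <;> omega

lemma wpar_word {k : ℕ} (hk : 1 ≤ k) : wpar (word k) % 2 = k % 2 := by
  unfold word
  split_ifs <;> simp only [fa, fb, fc, fd, wpar_pow, wpar_gen, gpar] <;> omega

/-- The heap sizes `5` and `n + 7` are exactly the sources of the letters `c` and `d_n`. -/
lemma vis_word {k : ℕ} (hk : 1 ≤ k) (x : ℕ) :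
    (∃ g, g ∈ (word k).toAdd ∧ GVis g x) ↔ Vis k x := by
  unfold word Vis
  split_ifs <;> simp only [fa, fb, fc, fd, mem_pow, mem_gen] <;> simp [GVis] <;> omega

/-- A word representing `Φ` of a position. -/
def words (G : Multiset ℕ) : FM47 := (G.map word).prod

lemma cls_words (G : Multiset ℕ) : cls (words G) = Phi47 G := by
  rw [words, Phi47, map_multiset_prod, Multiset.map_map]
  simp [cls_word]

lemma words_inv (G : Multiset ℕ) (hpos : ∀ k ∈ G, 1 ≤ k) :
    wdeg (words G) = tot G ∧ wpar (words G) % 2 = G.sum % 2 ∧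
      ∀ x, (∃ g, g ∈ (words G).toAdd ∧ GVis g x) ↔ ∃ k ∈ G, Vis k x := by
  induction G using Multiset.induction_on with
  | empty => simp [words, tot, wdeg_one, wpar_one]
  | cons k R ih =>
    have hk : 1 ≤ k := hpos k (by simp)
    obtain ⟨h1, h2, h3⟩ := ih fun g hg => hpos g (by simp [hg])
    have e : words (k ::ₘ R) = word k * words R := by simp [words]
    rw [e, wdeg_mul, wpar_mul, tot_cons, Multiset.sum_cons, wdeg_word hk, h1]
    refine ⟨rfl, by have := wpar_word hk; omega, fun x => ?_⟩
    simp only [mem_mul, or_and_right, exists_or, vis_word hk, h3, Multiset.mem_cons,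
      exists_eq_left]

lemma F_iff_mem_P (G : Multiset ℕ) (hpos : ∀ k ∈ G, 1 ≤ k) : F G ↔ Phi47 G ∈ P47 := by
  obtain ⟨h1, h2, h3⟩ := words_inv G hpos
  rw [← cls_words, mem_P_iff]
  simp only [WF, F, Good, WVis, h1, h2, h3]

end Game47

/-- For every position `G` of 4.7 (a finite multiset of positive heap sizes,
including the empty position), `G` is a misère P-position iff `Φ(G) ∈ P`.
Here `PP` is the misère P-position predicate, characterized recursively: a
position is a P-position iff it has at least one option and all options are
N-positions. -/
theorem phi47_correct
    (PP : Multiset ℕ → Prop)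
    (hPP : ∀ G : Multiset ℕ,
      PP G ↔ ((∃ G', Move47 G G') ∧ ∀ G', Move47 G G' → ¬ PP G'))
    (G : Multiset ℕ) (hpos : ∀ k ∈ G, 1 ≤ k) :
    PP G ↔ Phi47 G ∈ P47 := by
  exact (Game47.PP_iff_F PP hPP G hpos).trans (Game47.F_iff_mem_P G hpos)
end

section
/- The bipartite monoid (Q, P) associated to the game 4.7 is reduced: for all x ≠ y in Q there exists z ∈ Q such that exactly one of x·z ∈ P, y·z ∈ P holds. -/
/-! ### The invariant -/

namespace Q47Aux

/-- Parity weight of a generator (only relevant mod 2). -/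
def wPar : Gen47 → ℕ
  | .a => 1
  | .b => 0
  | .c => 1
  | .d n => n + 1

/-- Degree of a generator. -/
def wDeg : Gen47 → ℕ
  | .a => 0
  | .b => 1
  | .c => 2
  | .d n => n + 4

/-- Level of a generator. -/
def wLev : Gen47 → ℕ
  | .a => 0
  | .b => 0
  | .c => 1
  | .d n => n + 2

/-- Total parity weight of a word. -/
def par (u : FM47) : ℕ := ((Multiplicative.toAdd u).map wPar).sum

/-- Total degree of a word. -/
def deg (u : FM47) : ℕ := ((Multiplicative.toAdd u).map wDeg).sum

/-- Level of a word: the largest level of its letters, `0` if there are none. -/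
def lev (u : FM47) : ℕ := ((Multiplicative.toAdd u).map wLev).sup

/-- The level after collapse: it becomes `0` once the degree reaches `2ℓ + 1`. -/
def clev (g l : ℕ) : ℕ := if 2 * l + 1 ≤ g then 0 else l

/-- The invariant of a word: parity mod 2, degree, and collapsed level. -/
def inv (u : FM47) : ℕ × ℕ × ℕ := (par u % 2, deg u, clev (deg u) (lev u))

@[simp] lemma par_mul (u v : FM47) : par (u * v) = par u + par v := by
  simp [par]

@[simp] lemma deg_mul (u v : FM47) : deg (u * v) = deg u + deg v := by
  simp [deg]

@[simp] lemma lev_mul (u v : FM47) : lev (u * v) = max (lev u) (lev v) := by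
  simp [lev]

@[simp] lemma par_one : par 1 = 0 := by simp [par]
@[simp] lemma deg_one : deg 1 = 0 := by simp [deg]
@[simp] lemma lev_one : lev 1 = 0 := by simp [lev]

@[simp] lemma par_gen (x : Gen47) : par (fgen47 x) = wPar x := by simp [par, fgen47]
@[simp] lemma deg_gen (x : Gen47) : deg (fgen47 x) = wDeg x := by simp [deg, fgen47]
@[simp] lemma lev_gen (x : Gen47) : lev (fgen47 x) = wLev x := by simp [lev, fgen47]

@[simp] lemma par_pow (u : FM47) (k : ℕ) : par (u ^ k) = k * par u := by
  induction k with
  | zero => simp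
  | succ k ih => rw [pow_succ, par_mul, ih]; ring

@[simp] lemma deg_pow (u : FM47) (k : ℕ) : deg (u ^ k) = k * deg u := by
  induction k with
  | zero => simp
  | succ k ih => rw [pow_succ, deg_mul, ih]; ring

lemma lev_pow (u : FM47) (k : ℕ) : lev (u ^ k) = if k = 0 then 0 else lev u := by
  induction k with
  | zero => simp
  | succ k ih => rw [pow_succ, lev_mul, ih]; split_ifs <;> simp_all

@[simp] lemma par_fa : par fa = 1 := par_gen _
@[simp] lemma par_fb : par fb = 0 := par_gen _
@[simp] lemma par_fc : par fc = 1 := par_gen _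
@[simp] lemma par_fd (n : ℕ) : par (fd n) = n + 1 := par_gen _
@[simp] lemma deg_fa : deg fa = 0 := deg_gen _
@[simp] lemma deg_fb : deg fb = 1 := deg_gen _
@[simp] lemma deg_fc : deg fc = 2 := deg_gen _
@[simp] lemma deg_fd (n : ℕ) : deg (fd n) = n + 4 := deg_gen _
@[simp] lemma lev_fa : lev fa = 0 := lev_gen _
@[simp] lemma lev_fb : lev fb = 0 := lev_gen _
@[simp] lemma lev_fc : lev fc = 1 := lev_gen _
@[simp] lemma lev_fd (n : ℕ) : lev (fd n) = n + 2 := lev_gen _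
@[simp] lemma lev_fa_pow (k : ℕ) : lev (fa ^ k) = 0 := by simp [lev_pow]
@[simp] lemma lev_fb_pow (k : ℕ) : lev (fb ^ k) = 0 := by simp [lev_pow]

/-- Equality of invariants is a congruence: a level that has collapsed stays irrelevant after
multiplication, because the degree only grows. -/
def invCon : Con FM47 where
  r u v := inv u = inv v
  iseqv := ⟨fun _ => rfl, fun h => h.symm, fun h k => h.trans k⟩
  mul' := by
    intro w x y z h k
    simp only [inv, clev, Prod.mk.injEq, par_mul, deg_mul, lev_mul] at *
    obtain ⟨h1, h2, h3⟩ := h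
    obtain ⟨k1, k2, k3⟩ := k
    refine ⟨by omega, by omega, ?_⟩
    split_ifs at * <;> omega

lemma rel_le : ∀ x y, rel47 x y → invCon x y := by
  intro x y h
  change inv x = inv y
  rcases h with ⟨rfl, rfl⟩ | ⟨rfl, rfl⟩ | ⟨rfl, rfl⟩ | ⟨n, rfl, rfl⟩ | ⟨n, rfl, rfl⟩ |
    ⟨m, n, hmn, rfl, rfl⟩ <;>
  simp [inv, clev, lev_pow] <;> (try split_ifs) <;> omega

/-- The projection from words to `Q`. -/
def proj : FM47 →* Q47 := (conGen rel47).mk'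

lemma proj_surjective : Function.Surjective proj := Con.mk'_surjective

lemma inv_eq_of_proj_eq {u v : FM47} (h : proj u = proj v) : inv u = inv v := by
  have h' : conGen rel47 u v := (Con.eq _).1 h
  exact (Con.conGen_le.2 rel_le : conGen rel47 ≤ invCon) h'

lemma proj_eq_of_rel {u v : FM47} (h : rel47 u v) : proj u = proj v :=
  (Con.eq _).2 (ConGen.Rel.of _ _ h)

/-! ### Normal forms -/

lemma proj_fa : proj fa = qa := rfl
lemma proj_fb : proj fb = qb := rfl
lemma proj_fc : proj fc = qc := rfl
lemma proj_fd (n : ℕ) : proj (fd n) = qd n := rfl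

lemma qa_sq : qa ^ 2 = 1 := by
  simpa [proj_fa] using proj_eq_of_rel (u := fa ^ 2) (v := 1) (Or.inl ⟨rfl, rfl⟩)

lemma qb_qc : qb * qc = qa * qb ^ 3 := by
  simpa [proj_fa, proj_fb, proj_fc] using
    proj_eq_of_rel (u := fb * fc) (v := fa * fb ^ 3) (Or.inr <| Or.inl ⟨rfl, rfl⟩)

lemma qc_sq : qc ^ 2 = qb ^ 4 := by
  simpa [proj_fb, proj_fc] using
    proj_eq_of_rel (u := fc ^ 2) (v := fb ^ 4) (Or.inr <| Or.inr <| Or.inl ⟨rfl, rfl⟩)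

lemma qb_qd (n : ℕ) : qb ^ (n + 1) * qd n = qa ^ (n + 1) * qb ^ (2 * n + 5) := by
  simpa [proj_fa, proj_fb, proj_fd] using
    proj_eq_of_rel (u := fb ^ (n + 1) * fd n) (v := fa ^ (n + 1) * fb ^ (2 * n + 5))
      (Or.inr <| Or.inr <| Or.inr <| Or.inl ⟨n, rfl, rfl⟩)

lemma qc_qd (n : ℕ) : qc * qd n = qa * qb ^ 2 * qd n := by
  simpa [proj_fa, proj_fb, proj_fc, proj_fd] using
    proj_eq_of_rel (u := fc * fd n) (v := fa * fb ^ 2 * fd n)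
      (Or.inr <| Or.inr <| Or.inr <| Or.inr <| Or.inl ⟨n, rfl, rfl⟩)

lemma qd_qd {m n : ℕ} (h : m ≤ n) :
    qd m * qd n = qa ^ (m + 1) * qb ^ (m + 4) * qd n := by
  simpa [proj_fa, proj_fb, proj_fd] using
    proj_eq_of_rel (u := fd m * fd n) (v := fa ^ (m + 1) * fb ^ (m + 4) * fd n)
      (Or.inr <| Or.inr <| Or.inr <| Or.inr <| Or.inr ⟨m, n, h, rfl, rfl⟩)

lemma qa_pow_congr {i j : ℕ} (h : i % 2 = j % 2) : qa ^ i = qa ^ j := by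
  rw [← Nat.div_add_mod i 2, ← Nat.div_add_mod j 2, pow_add, pow_add, pow_mul, pow_mul, qa_sq, h]
  simp

/-- The normal form attached to parity `p`, degree `g` and level `l`, as a relation. -/
def IsNF (p g l : ℕ) (x : Q47) : Prop :=
  (l = 0 ∧ x = qa ^ p * qb ^ g) ∨
  (∃ m, l = 1 ∧ g = m + 2 ∧ x = qa ^ (p + 1) * qb ^ m * qc) ∨
  (∃ n m, l = n + 2 ∧ g = m + n + 4 ∧ x = qa ^ (p + n + 1) * qb ^ m * qd n)

lemma isNF_gen_mul (s : Gen47) {p g l : ℕ} {x : Q47} (h : IsNF p g l x) :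
    IsNF (wPar s + p) (wDeg s + g) (max (wLev s) l) (proj (fgen47 s) * x) := by
  cases s with
  | a =>
    change IsNF (1 + p) (0 + g) (max 0 l) (qa * x)
    rcases h with ⟨rfl, rfl⟩ | ⟨m, rfl, rfl, rfl⟩ | ⟨n, m, rfl, rfl, rfl⟩
    · exact Or.inl ⟨rfl, by rw [zero_add, pow_add, pow_one, mul_assoc]⟩
    · exact Or.inr <| Or.inl ⟨m, rfl, by omega, by
        rw [add_assoc, pow_add qa 1]; simp only [pow_one, mul_assoc]⟩
    · exact Or.inr <| Or.inr ⟨n, m, by omega, by omega, by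
        rw [show 1 + p + n + 1 = p + n + 1 + 1 by omega, pow_succ' qa (p + n + 1)]
        simp only [mul_assoc]⟩
  | b =>
    change IsNF (0 + p) (1 + g) (max 0 l) (qb * x)
    rw [zero_add]
    rcases h with ⟨rfl, rfl⟩ | ⟨m, rfl, rfl, rfl⟩ | ⟨n, m, rfl, rfl, rfl⟩
    · exact Or.inl ⟨rfl, by rw [pow_add qb, pow_one, mul_left_comm]⟩
    · exact Or.inr <| Or.inl ⟨m + 1, rfl, by omega, by
        rw [pow_succ' qb]; simp only [mul_assoc, mul_left_comm]⟩
    · exact Or.inr <| Or.inr ⟨n, m + 1, by omega, by omega, by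
        rw [pow_succ' qb]; simp only [mul_assoc, mul_left_comm]⟩
  | c =>
    change IsNF (1 + p) (2 + g) (max 1 l) (qc * x)
    rcases h with ⟨rfl, rfl⟩ | ⟨m, rfl, rfl, rfl⟩ | ⟨n, m, rfl, rfl, rfl⟩
    · refine Or.inr <| Or.inl ⟨g, rfl, by omega, ?_⟩
      rw [qa_pow_congr (show (1 + p + 1) % 2 = p % 2 by omega), mul_comm]
    · -- `c` times `b^m c` is the pure word `b^(m+4)`, which equals `a b^(m+2) c`.
      refine Or.inr <| Or.inl ⟨m + 2, rfl, by omega, ?_⟩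
      calc qc * (qa ^ (p + 1) * qb ^ m * qc) = qa ^ (p + 1) * qb ^ m * qc ^ 2 := by
            rw [pow_two]; simp only [mul_assoc, mul_comm]
        _ = qa ^ (p + 1) * qb ^ m * qb ^ 4 := by rw [qc_sq]
        _ = qa ^ (1 + p + 1 + 1) * qb ^ (m + 4) := by
            rw [qa_pow_congr (show (1 + p + 1 + 1) % 2 = (p + 1) % 2 by omega), pow_add qb,
              mul_assoc]
        _ = qa ^ (1 + p + 1) * qb ^ (m + 1) * (qa * qb ^ 3) := by
            rw [pow_succ qa, show m + 4 = m + 1 + 3 from rfl, pow_add qb (m + 1)]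
            exact mul_mul_mul_comm _ _ _ _
        _ = qa ^ (1 + p + 1) * qb ^ (m + 2) * qc := by
            rw [← qb_qc, show m + 2 = m + 1 + 1 from rfl, pow_succ qb (m + 1)]
            simp only [mul_assoc]
    · refine Or.inr <| Or.inr ⟨n, m + 2, by omega, by omega, ?_⟩
      calc qc * (qa ^ (p + n + 1) * qb ^ m * qd n)
          = qa ^ (p + n + 1) * qb ^ m * (qc * qd n) := mul_left_comm _ _ _
        _ = (qa ^ (p + n + 1) * qb ^ m) * (qa * qb ^ 2) * qd n := by
            rw [qc_qd]; simp only [mul_assoc]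
        _ = qa ^ (1 + p + n + 1) * qb ^ (m + 2) * qd n := by
            rw [mul_mul_mul_comm, ← pow_succ, ← pow_add]
            congr 4; omega
  | d k =>
    change IsNF (k + 1 + p) (k + 4 + g) (max (k + 2) l) (qd k * x)
    rcases h with ⟨rfl, rfl⟩ | ⟨m, rfl, rfl, rfl⟩ | ⟨n, m, rfl, rfl, rfl⟩
    · refine Or.inr <| Or.inr ⟨k, g, by omega, by omega, ?_⟩
      rw [qa_pow_congr (show (k + 1 + p + k + 1) % 2 = p % 2 by omega), mul_comm]
    · refine Or.inr <| Or.inr ⟨k, m + 2, by omega, by omega, ?_⟩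
      calc qd k * (qa ^ (p + 1) * qb ^ m * qc)
          = qa ^ (p + 1) * qb ^ m * (qc * qd k) := by
            rw [mul_comm, mul_assoc]
        _ = (qa ^ (p + 1) * qb ^ m) * (qa * qb ^ 2) * qd k := by
            rw [qc_qd]; simp only [mul_assoc]
        _ = qa ^ (k + 1 + p + k + 1) * qb ^ (m + 2) * qd k := by
            rw [mul_mul_mul_comm, ← pow_succ, ← pow_add]
            rw [qa_pow_congr (show (k + 1 + p + k + 1) % 2 = (p + 1 + 1) % 2 by omega)]
    · rcases le_total k n with hkn | hkn
      · refine Or.inr <| Or.inr ⟨n, m + (k + 4), by omega, by omega, ?_⟩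
        calc qd k * (qa ^ (p + n + 1) * qb ^ m * qd n)
            = qa ^ (p + n + 1) * qb ^ m * (qd k * qd n) := mul_left_comm _ _ _
          _ = (qa ^ (p + n + 1) * qb ^ m) * (qa ^ (k + 1) * qb ^ (k + 4)) * qd n := by
              rw [qd_qd hkn]; simp only [mul_assoc]
          _ = _ := by
              rw [mul_mul_mul_comm, ← pow_add, ← pow_add,
                qa_pow_congr (show (p + n + 1 + (k + 1)) % 2 = (k + 1 + p + n + 1) % 2 by omega)]
      · refine Or.inr <| Or.inr ⟨k, m + (n + 4), by omega, by omega, ?_⟩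
        calc qd k * (qa ^ (p + n + 1) * qb ^ m * qd n)
            = qa ^ (p + n + 1) * qb ^ m * (qd n * qd k) := by
              rw [mul_left_comm, mul_comm (qd k)]
          _ = (qa ^ (p + n + 1) * qb ^ m) * (qa ^ (n + 1) * qb ^ (n + 4)) * qd k := by
              rw [qd_qd hkn]; simp only [mul_assoc]
          _ = _ := by
              rw [mul_mul_mul_comm, ← pow_add, ← pow_add,
                qa_pow_congr (show (p + n + 1 + (n + 1)) % 2 = (k + 1 + p + k + 1) % 2 by omega)]

/-- Every word reduces to the normal form given by its (uncollapsed) weights. -/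
lemma isNF_proj (u : FM47) : IsNF (par u) (deg u) (lev u) (proj u) := by
  induction u using Multiplicative.rec with
  | ofAdd u =>
    induction u using Multiset.induction_on with
    | empty => exact Or.inl ⟨rfl, by change proj 1 = qa ^ (par 1) * qb ^ (deg 1); simp⟩
    | cons s u ih =>
      have h : (Multiplicative.ofAdd (s ::ₘ u) : FM47) = fgen47 s * Multiplicative.ofAdd u := rfl
      rw [h, par_mul, deg_mul, lev_mul, par_gen, deg_gen, lev_gen, map_mul]
      exact isNF_gen_mul s ih

/-- Beyond the threshold a normal form is a word in `a` and `b` only. -/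
lemma IsNF.collapse {p g l : ℕ} {x : Q47} (h : IsNF p g l x) (hg : 2 * l + 1 ≤ g) :
    x = qa ^ p * qb ^ g := by
  rcases h with ⟨-, h⟩ | ⟨m, rfl, rfl, rfl⟩ | ⟨n, m, rfl, rfl, rfl⟩
  · exact h
  · obtain ⟨k, rfl⟩ : ∃ k, m = k + 1 := ⟨m - 1, by omega⟩
    calc qa ^ (p + 1) * qb ^ (k + 1) * qc = (qa ^ (p + 1) * qb ^ k) * (qb * qc) := by
          rw [pow_succ qb]; simp only [mul_assoc]
      _ = qa ^ p * qb ^ (k + 1 + 2) := by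
          rw [qb_qc, mul_mul_mul_comm, ← pow_succ, ← pow_add,
            qa_pow_congr (show (p + 1 + 1) % 2 = p % 2 by omega)]
  · obtain ⟨k, rfl⟩ : ∃ k, m = k + (n + 1) := ⟨m - (n + 1), by omega⟩
    calc qa ^ (p + n + 1) * qb ^ (k + (n + 1)) * qd n
        = (qa ^ (p + n + 1) * qb ^ k) * (qb ^ (n + 1) * qd n) := by
          rw [pow_add qb]; simp only [mul_assoc]
      _ = qa ^ p * qb ^ (k + (n + 1) + n + 4) := by
          rw [qb_qd, mul_mul_mul_comm, ← pow_add, ← pow_add,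
            qa_pow_congr (show (p + n + 1 + (n + 1)) % 2 = p % 2 by omega)]
          congr 2; omega

/-- The normal form of a word, in terms of its collapsed level. -/
lemma isNF_proj_clev (u : FM47) : IsNF (par u) (deg u) (clev (deg u) (lev u)) (proj u) := by
  unfold clev
  split_ifs with h
  · exact Or.inl ⟨rfl, (isNF_proj u).collapse h⟩
  · exact isNF_proj u

/-- A normal form is determined by its parity mod 2, degree and level. -/
lemma IsNF.unique {p p' g l : ℕ} {x y : Q47} (hp : p % 2 = p' % 2)
    (hx : IsNF p g l x) (hy : IsNF p' g l y) : x = y := by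
  rcases hx with ⟨rfl, rfl⟩ | ⟨m, rfl, rfl, rfl⟩ | ⟨n, m, rfl, rfl, rfl⟩ <;>
  rcases hy with ⟨h, rfl⟩ | ⟨m', h, h', rfl⟩ | ⟨n', m', h, h', rfl⟩ <;>
  try omega
  · rw [qa_pow_congr hp]
  · obtain rfl : m = m' := by omega
    rw [qa_pow_congr (show (p + 1) % 2 = (p' + 1) % 2 by omega)]
  · obtain rfl : n = n' := by omega
    obtain rfl : m = m' := by omega
    rw [qa_pow_congr (show (p + n + 1) % 2 = (p' + n + 1) % 2 by omega)]

/-- The invariant is complete. -/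
lemma proj_eq_iff {u v : FM47} : proj u = proj v ↔ inv u = inv v := by
  refine ⟨inv_eq_of_proj_eq, fun h => ?_⟩
  have hu := isNF_proj_clev u
  have hv := isNF_proj_clev v
  simp only [inv, Prod.mk.injEq] at h
  obtain ⟨h1, h2, h3⟩ := h
  rw [h3, h2] at hu
  exact hu.unique h1 hv

/-! ### The set `P` in terms of the invariant -/

/-- Membership in `P`, read off parity `p` (mod 2), degree `g` and collapsed level `l`. -/
def InP (p g l : ℕ) : Prop :=
  (p % 2 = 1 ∧ g = 0 ∧ l = 0) ∨ (p % 2 = 0 ∧ g % 2 = 0 ∧ 2 ≤ g ∧ l = 0) ∨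
  (p % 2 = 1 ∧ g % 2 = 1 ∧ 2 ≤ l)

lemma proj_mem_P47_iff (u : FM47) :
    proj u ∈ P47 ↔ InP (par u) (deg u) (clev (deg u) (lev u)) := by
  constructor
  · rintro (((h | ⟨m, hm, h⟩) | ⟨m, n, hm, hn, hmn, h⟩) | ⟨m, n, hm, hn, hmn, h⟩)
    · have h' : inv u = inv fa := inv_eq_of_proj_eq h
      simp [inv] at h'
      rw [h'.2.2, h'.2.1]
      unfold InP clev; split_ifs <;> omega
    · have h' : inv u = inv (fb ^ (2 * m)) :=
        inv_eq_of_proj_eq (by rw [h, map_pow, proj_fb])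
      simp [inv] at h'
      rw [h'.2.2, h'.2.1]
      unfold InP clev; split_ifs <;> omega
    · have h' : inv u = inv (fb ^ m * fd n) :=
        inv_eq_of_proj_eq (by rw [h, map_mul, map_pow, proj_fb, proj_fd])
      simp [inv] at h'
      rw [h'.2.2, h'.2.1]
      unfold InP clev; split_ifs <;> omega
    · have h' : inv u = inv (fa * fb ^ m * fd n) :=
        inv_eq_of_proj_eq (by rw [h, map_mul, map_mul, map_pow, proj_fa, proj_fb, proj_fd])
      simp [inv] at h'
      rw [h'.2.2, h'.2.1]
      unfold InP clev; split_ifs <;> omega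
  · intro h
    have hu := isNF_proj_clev u
    have hle : clev (deg u) (lev u) = 0 ∨ deg u ≤ 2 * clev (deg u) (lev u) := by
      unfold clev; split_ifs <;> omega
    generalize clev (deg u) (lev u) = l at *
    generalize deg u = g at *
    generalize par u = p at *
    generalize proj u = x at *
    rcases h with ⟨hp, rfl, rfl⟩ | ⟨hp, hg, hg2, rfl⟩ | ⟨hp, hg, hl⟩
    · refine Or.inl <| Or.inl <| Or.inl ?_
      rcases hu with ⟨-, rfl⟩ | ⟨m, h, -⟩ | ⟨n, m, h, -⟩ <;> try omega
      change _ = qa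
      rw [qa_pow_congr (show p % 2 = 1 % 2 by omega), pow_one, pow_zero, mul_one]
    · refine Or.inl <| Or.inl <| Or.inr ⟨g / 2, by omega, ?_⟩
      rcases hu with ⟨-, rfl⟩ | ⟨m, h, -⟩ | ⟨n, m, h, -⟩ <;> try omega
      rw [qa_pow_congr (show p % 2 = 0 % 2 by omega), pow_zero, one_mul,
        show 2 * (g / 2) = g by omega]
    · rcases hu with ⟨h, -⟩ | ⟨m, h, -⟩ | ⟨n, m, rfl, rfl, rfl⟩ <;> try omega
      rcases Nat.mod_two_eq_zero_or_one n with hn | hn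
      · refine Or.inl <| Or.inr ⟨m, n, by omega, hn, by omega, ?_⟩
        rw [qa_pow_congr (show (p + n + 1) % 2 = 0 % 2 by omega), pow_zero, one_mul]
      · refine Or.inr ⟨m, n, by omega, hn, by omega, ?_⟩
        rw [qa_pow_congr (show (p + n + 1) % 2 = 1 % 2 by omega), pow_one]

/-! ### Separation -/

/-- A word multiplying `u` into `P` but not `v`, when the invariants differ in the stated way:
in parity or degree mod 2, in degree with `v` the smaller, or in level with `v` the larger. -/
lemma exists_sep (u v : FM47)
    (h : par u % 2 ≠ par v % 2 ∨ deg u % 2 ≠ deg v % 2 ∨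
      (par u % 2 = par v % 2 ∧ deg u % 2 = deg v % 2 ∧ deg v < deg u) ∨
      (par u % 2 = par v % 2 ∧ deg u = deg v ∧
        clev (deg u) (lev u) < clev (deg v) (lev v))) :
    ∃ w, proj (u * w) ∈ P47 ∧ proj (v * w) ∉ P47 := by
  simp only [proj_mem_P47_iff]
  by_cases h1 : par u % 2 ≠ par v % 2 ∨ deg u % 2 ≠ deg v % 2
  · -- The exponent of `b` has the parity of `deg u` and exceeds both thresholds.
    refine ⟨fa ^ par u * fb ^ (deg u + 2 * (lev u + lev v + 1)), ?_⟩
    simp only [par_mul, deg_mul, lev_mul, par_pow, deg_pow, lev_fa_pow, lev_fb_pow, par_fa, par_fb,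
      deg_fa, deg_fb, InP, clev, mul_one, mul_zero, max_self, Nat.max_zero]
    rw [if_pos (by omega), if_pos (by omega)]
    exact ⟨by omega, by omega⟩
  push Not at h1
  by_cases h2 : deg v < deg u
  · -- `N` is at least both levels and `deg v`; `v * w` has degree exactly `2 * (N + 2)`.
    obtain ⟨N, hN⟩ : ∃ N, N = deg v + lev u + lev v := ⟨_, rfl⟩
    refine ⟨fa ^ (par u + N + 1) * fb ^ (N - deg v) * fd N, ?_⟩
    simp only [par_mul, deg_mul, lev_mul, par_pow, deg_pow, lev_fa_pow, lev_fb_pow, par_fa, par_fb,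
      deg_fa, deg_fb, par_fd, deg_fd, lev_fd, InP, clev, mul_one, mul_zero]
    split_ifs <;> omega
  · have h3 : par u % 2 = par v % 2 ∧ deg u = deg v ∧
        clev (deg u) (lev u) < clev (deg v) (lev v) := by omega
    refine ⟨fa ^ par u * fb ^ (2 * lev v - deg v), ?_⟩
    simp only [par_mul, deg_mul, lev_mul, par_pow, deg_pow, lev_fa_pow, lev_fb_pow, par_fa, par_fb,
      deg_fa, deg_fb, InP, clev, mul_one, mul_zero, max_self, Nat.max_zero] at h3 ⊢
    split_ifs at h3 ⊢ <;> omega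

end Q47Aux

/-- The bipartite monoid `(Q, P)` for 4.7 is reduced: any two distinct
elements are distinguished by multiplication into `P`. -/
theorem Q47_reduced :
    ∀ x y : Q47, x ≠ y → ∃ z : Q47, Xor' (x * z ∈ P47) (y * z ∈ P47) := by
  intro x y hxy
  obtain ⟨u, rfl⟩ := Q47Aux.proj_surjective x
  obtain ⟨v, rfl⟩ := Q47Aux.proj_surjective y
  have hne : Q47Aux.inv u ≠ Q47Aux.inv v := fun h => hxy (Q47Aux.proj_eq_iff.2 h)
  simp only [Q47Aux.inv, ne_eq, Prod.mk.injEq, not_and_or] at hne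
  -- Up to exchanging `u` and `v`, one of the cases of `exists_sep` applies.
  have hsep : (∃ w, Q47Aux.proj (u * w) ∈ P47 ∧ Q47Aux.proj (v * w) ∉ P47) ∨
      (∃ w, Q47Aux.proj (v * w) ∈ P47 ∧ Q47Aux.proj (u * w) ∉ P47) := by
    by_cases h : Q47Aux.par u % 2 ≠ Q47Aux.par v % 2 ∨ Q47Aux.deg u % 2 ≠ Q47Aux.deg v % 2 ∨
        Q47Aux.deg v < Q47Aux.deg u ∨ (Q47Aux.deg u = Q47Aux.deg v ∧
          Q47Aux.clev (Q47Aux.deg u) (Q47Aux.lev u) < Q47Aux.clev (Q47Aux.deg v) (Q47Aux.lev v))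
    · exact Or.inl (Q47Aux.exists_sep u v (by omega))
    · exact Or.inr (Q47Aux.exists_sep v u (by omega))
  rcases hsep with ⟨w, h1, h2⟩ | ⟨w, h1, h2⟩
  · exact ⟨Q47Aux.proj w, Or.inl ⟨by rwa [← map_mul], by rwa [← map_mul]⟩⟩
  · exact ⟨Q47Aux.proj w, Or.inr ⟨by rwa [← map_mul], by rwa [← map_mul]⟩⟩
end

section
/- In the monoid Q associated to the game 4.7, for all heap sizes k ≤ k' one has Φ(H_k)·Φ(H_{k'}) = a^{g(H_k)} · b^{t(H_k)} · Φ(H_{k'}), where g(H_k) = 2 if k is even and g(H_k) = 1 if k is odd. -/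
/-- The function `t` on single heaps for 4.7. -/
def t47 (k : ℕ) : ℕ :=
  if k = 1 then 0 else if k = 2 then 1 else k - 3

theorem q47_eq {x y : FM47} (h : rel47 x y) :
    (conGen rel47).mk' x = (conGen rel47).mk' y :=
  (Con.eq _).2 (ConGen.Rel.of _ _ h)

theorem qa_sq : qa ^ 2 = 1 :=
  q47_eq (Or.inl ⟨rfl, rfl⟩)

theorem qb_mul_qc : qb * qc = qa * qb ^ 3 :=
  q47_eq (Or.inr (Or.inl ⟨rfl, rfl⟩))

theorem qc_sq : qc ^ 2 = qb ^ 4 :=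
  q47_eq (Or.inr (Or.inr (Or.inl ⟨rfl, rfl⟩)))

theorem qc_mul_qd (n : ℕ) : qc * qd n = qa * qb ^ 2 * qd n :=
  q47_eq (Or.inr (Or.inr (Or.inr (Or.inr (Or.inl ⟨n, rfl, rfl⟩)))))

theorem qd_mul_qd {m n : ℕ} (h : m ≤ n) :
    qd m * qd n = qa ^ (m + 1) * qb ^ (m + 4) * qd n :=
  q47_eq (Or.inr (Or.inr (Or.inr (Or.inr (Or.inr ⟨m, n, h, rfl, rfl⟩)))))

theorem qc_mul_qc : qc * qc = qa * qb ^ 2 * qc :=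
  calc qc * qc = qb ^ 4 := by rw [← pow_two, qc_sq]
    _ = qa ^ 2 * qb ^ 4 := by rw [qa_sq, one_mul]
    _ = qa * qb * (qa * qb ^ 3) := by
      rw [mul_mul_mul_comm, ← pow_two, ← pow_succ']
    _ = qa * qb ^ 2 * qc := by rw [← qb_mul_qc, pow_two]; simp only [mul_assoc]

theorem qc_mul_qb_cube : qc * qb ^ 3 = qa * qb ^ 2 * qb ^ 3 :=
  calc qc * qb ^ 3 = qb * qc * qb ^ 2 := by rw [pow_succ' qb 2, ← mul_assoc, mul_comm qc qb]
    _ = qa * qb ^ 2 * qb ^ 3 := by rw [qb_mul_qc, mul_right_comm]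

/-- Powers of `a` only depend on the parity of the exponent. -/
theorem qa_pow_parity (k : ℕ) : qa ^ k = qa ^ (if k % 2 = 0 then 2 else 1) := by
  conv_lhs => rw [← Nat.div_add_mod k 2, pow_add, pow_mul, qa_sq, one_pow, one_mul]
  rcases Nat.mod_two_eq_zero_or_one k with h | h <;> simp [h, qa_sq]

theorem phi47_add_seven (m : ℕ) : phi47 (m + 7) = qd m := by
  simp [phi47]

/-- `c` acts as `a b²` on the value of every heap of size at least `5`. -/
theorem qc_mul_phi47 {k : ℕ} (hk : 5 ≤ k) : qc * phi47 k = qa * qb ^ 2 * phi47 k := by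
  rcases (by omega : k = 5 ∨ k = 6 ∨ 7 ≤ k) with rfl | rfl | h
  · simpa [phi47] using qc_mul_qc
  · simpa [phi47] using qc_mul_qb_cube
  · obtain ⟨n, rfl⟩ := Nat.exists_eq_add_of_le' h
    rw [phi47_add_seven, qc_mul_qd]

/-- For heap sizes `1 ≤ k ≤ k'`, one has
`Φ(H_k) Φ(H_k') = a^(g(H_k)) b^(t(H_k)) Φ(H_k')`, where `g(H_k)` is 2 if `k`
is even and 1 if `k` is odd. -/
theorem phi47_two_heaps :
    ∀ k k' : ℕ, 1 ≤ k → k ≤ k' →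
      phi47 k * phi47 k' =
        qa ^ (if k % 2 = 0 then 2 else 1) * qb ^ t47 k * phi47 k' := by
  intro k k' hk hkk'
  rcases (by omega : k = 1 ∨ k = 2 ∨ k = 3 ∨ k = 4 ∨ k = 5 ∨ k = 6 ∨ 7 ≤ k) with
    rfl | rfl | rfl | rfl | rfl | rfl | h
  · simp [phi47, t47]
  · simp [phi47, t47, qa_sq]
  · simp [phi47, t47]
  · simp [phi47, t47, qa_sq]
  · have h5 : phi47 5 = qc := by simp [phi47]
    rw [h5, qc_mul_phi47 hkk']
    simp [t47]
  · simp [phi47, t47, qa_sq]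
  · obtain ⟨m, rfl⟩ := Nat.exists_eq_add_of_le' h
    obtain ⟨n, rfl⟩ := Nat.exists_eq_add_of_le' (h.trans hkk')
    have ht : t47 (m + 7) = m + 4 := by simp [t47]
    have ha : qa ^ (m + 7) = qa ^ (m + 1) := by
      rw [show m + 7 = m + 1 + 2 * 3 by omega, pow_add, pow_mul, qa_sq, one_pow, mul_one]
    rw [phi47_add_seven, phi47_add_seven, qd_mul_qd (by omega), ← qa_pow_parity, ha, ht]
end
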